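/- arXiv:1806.07616 — 2 statements merged into one kernel-verified Lean document; each statement's English description precedes it below -/
import Mathlib

section
/- Let S be a polynomial ring over a field k with a variable x, and let I_1, J, K be monomial ideals of S none of whose minimal monomial generators is divisible by x. Set I = I_1 + (x^m) with m ≥ 1. Then the colon ideal ((IJ + IK + JK) : x^m) equals J + K. -/
/-!
Since `IJ + IK + JK ⊆ J + K`, the colon ideal is contained in `(J + K : x^m)`. The ideal `J + K`
is again generated by monomials free of `x`, and whether a monomial lies in such an ideal does not
depend on its exponent of `x`; hence `x^m` is a nonzerodivisor modulo `J + K` and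
`(J + K : x^m) = J + K` (`IsMonomialIdealAvoiding.mem_of_mul_X_pow_mem`). The reverse inclusion
holds because `x^m ∈ I`, so `x^m (J + K) ⊆ IJ + IK`.
-/

open MvPolynomial

/-- A monomial ideal of `k[x_1, …, x_r]` none of whose (minimal) monomial generators is
divisible by the variable `x i`, i.e. an ideal generated by monomials in which the variable
`x i` does not occur. -/
def IsMonomialIdealAvoiding {k : Type*} [Field k] {r : ℕ} (i : Fin r)
    (I : Ideal (MvPolynomial (Fin r) k)) : Prop :=
  ∃ G : Set (Fin r →₀ ℕ), (∀ d ∈ G, d i = 0) ∧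
    I = Ideal.span ((fun d => (monomial d (1 : k) : MvPolynomial (Fin r) k)) '' G)

theorem IsMonomialIdealAvoiding.add {k : Type*} [Field k] {r : ℕ} {i : Fin r}
    {J K : Ideal (MvPolynomial (Fin r) k)} (hJ : IsMonomialIdealAvoiding i J)
    (hK : IsMonomialIdealAvoiding i K) : IsMonomialIdealAvoiding i (J + K) := by
  obtain ⟨G, hG, rfl⟩ := hJ
  obtain ⟨H, hH, rfl⟩ := hK
  refine ⟨G ∪ H, fun d hd => hd.elim (hG d) (hH d), ?_⟩
  rw [Set.image_union, Ideal.span_union, Submodule.add_eq_sup]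

/-- Powers of `x i` are nonzerodivisors modulo an ideal generated by monomials free of `x i`. -/
theorem IsMonomialIdealAvoiding.mem_of_mul_X_pow_mem {k : Type*} [Field k] {r : ℕ} {i : Fin r}
    {J : Ideal (MvPolynomial (Fin r) k)} (hJ : IsMonomialIdealAvoiding i J) {m : ℕ}
    {f : MvPolynomial (Fin r) k} (hf : f * X i ^ m ∈ J) : f ∈ J := by
  obtain ⟨G, hG, rfl⟩ := hJ
  rw [mem_ideal_span_monomial_image] at hf ⊢
  intro d hd
  obtain ⟨g, hg, hle⟩ := hf (d + Finsupp.single i m) (by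
    rw [mem_support_iff, X_pow_eq_monomial, coeff_mul_monomial, mul_one]
    exact mem_support_iff.mp hd)
  refine ⟨g, hg, fun j => ?_⟩
  by_cases hj : j = i
  · subst hj
    simp [hG g hg]
  · simpa [Finsupp.single_apply, Ne.symm hj] using hle j

/-- Let `S` be a polynomial ring over a field `k` with a variable `x`, and
`I₁`, `J`, `K` monomial ideals of `S` none of whose minimal monomial generators is divisible
by `x`.  Set `I = I₁ + (x^m)` with `m ≥ 1`.  Then `((IJ + IK + JK) : x^m) = J + K`. -/
theorem colon_sum_products_eq {k : Type*} [Field k] {r : ℕ} (i : Fin r)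
    (I₁ J K : Ideal (MvPolynomial (Fin r) k))
    (hI₁ : IsMonomialIdealAvoiding i I₁) (hJ : IsMonomialIdealAvoiding i J)
    (hK : IsMonomialIdealAvoiding i K) (m : ℕ) (hm : 1 ≤ m)
    (I : Ideal (MvPolynomial (Fin r) k))
    (hI : I = I₁ + Ideal.span {(X i : MvPolynomial (Fin r) k) ^ m}) :
    (I * J + I * K + J * K).colon
        (Ideal.span {(X i : MvPolynomial (Fin r) k) ^ m}) = J + K := by
  have hx : (X i : MvPolynomial (Fin r) k) ^ m ∈ I := by
    rw [hI]
    exact Ideal.mem_sup_right (Ideal.mem_span_singleton_self _)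
  ext f
  rw [Submodule.mem_colon]
  constructor
  · intro h
    have h1 := h _ (Ideal.mem_span_singleton_self _)
    refine (hJ.add hK).mem_of_mul_X_pow_mem (m := m) ?_
    have hle : I * J + I * K + J * K ≤ J + K :=
      sup_le (sup_le (Ideal.mul_le_right.trans le_sup_left)
        (Ideal.mul_le_right.trans le_sup_right)) (Ideal.mul_le_right.trans le_sup_right)
    exact hle h1
  · intro hf p hp
    have hpI : p ∈ I := (Ideal.span_singleton_le_iff_mem I).mpr hx hp
    have h2 : p * f ∈ I * (J + K) := Ideal.mul_mem_mul hpI hf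
    rw [mul_add] at h2
    rw [smul_eq_mul, mul_comm f p]
    exact Ideal.mem_sup_left h2
end

section
/- Let S be a polynomial ring over a field k with a variable x, and let I_1, J_1, K_1 be monomial ideals of S none of whose minimal monomial generators is divisible by x. Set I = I_1 + (x^m), J = J_1 + (x^n) and K = K_1 + (x^s) with m ≥ n ≥ s ≥ 1 and m ≤ n + s. Then the colon ideal ((IJK) : x^{n+s}) equals I_1 + J_1K_1 + x^{m−n} J_1 + x^{m−s} K_1 + (x^m). -/
/-!
Everything is a computation with exponent vectors. If `M` is spanned by the monomials with
exponents in `G`, then `f * x^N ∈ M` forces `f` into the ideal spanned by the monomials with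
exponents `d - N e_x`, `d ∈ G`, with truncated subtraction, because
`d ≤ e + N e_x ↔ d - N e_x ≤ e` (`mem_span_monomial_tsub`). Applied to the generators `a + b + c`
of `IJK`, where each of `a`, `b`, `c` is either free of `x` or the pure power adjoined to the
corresponding ideal, it remains to see that each truncated generator is divisible by a monomial
of one of the five summands. Conversely, `x^(n+s)` times each summand lies in one of the products
in the expansion of `IJK`; `m ≤ n + s` is what makes this work for `J₁K₁`.
-/

open MvPolynomial

/-- A monomial ideal divided by `x^N`: the exponents of the generators drop by `N` in the variable
`x`, truncated at zero. -/
lemma mem_span_monomial_tsub {k : Type*} [Field k] {r : ℕ} (i : Fin r) (N : ℕ)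
    (G : Set (Fin r →₀ ℕ)) (f : MvPolynomial (Fin r) k)
    (hf : f * X i ^ N ∈ Ideal.span ((fun d => (monomial d (1 : k))) '' G)) :
    f ∈ Ideal.span ((fun d => (monomial d (1 : k))) ''
      ((fun d => d - Finsupp.single i N) '' G)) := by
  rw [mem_ideal_span_monomial_image] at hf ⊢
  intro e he
  obtain ⟨d, hd, hde⟩ := hf (e + Finsupp.single i N) (by
    rw [mem_support_iff] at he ⊢
    rwa [X_pow_eq_monomial, coeff_mul_monomial, mul_one])
  exact ⟨_, ⟨d, hd, rfl⟩, tsub_le_iff_right.mpr hde⟩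

lemma monomial_mem_of_le {k : Type*} [Field k] {r : ℕ} (R : Ideal (MvPolynomial (Fin r) k))
    {d e : Fin r →₀ ℕ} (hd : monomial d (1 : k) ∈ R) (h : d ≤ e) : monomial e (1 : k) ∈ R := by
  rw [← tsub_add_cancel_of_le h, ← one_mul (1 : k), ← monomial_mul]
  exact R.mul_mem_left _ hd

lemma span_monomial_mul {k : Type*} [Field k] {r : ℕ} (G H : Set (Fin r →₀ ℕ)) :
    Ideal.span ((fun d => (monomial d (1 : k))) '' G) *
      Ideal.span ((fun d => (monomial d (1 : k))) '' H) =
    Ideal.span ((fun d => (monomial d (1 : k))) '' (Set.image2 (· + ·) G H)) := by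
  rw [Ideal.span_mul_span', ← Set.image2_mul, Set.image2_image_left, Set.image2_image_right,
    Set.image_image2]
  simp [monomial_mul]

lemma span_monomial_add_pow {k : Type*} [Field k] {r : ℕ} (i : Fin r) (N : ℕ)
    (G : Set (Fin r →₀ ℕ)) :
    Ideal.span ((fun d => (monomial d (1 : k))) '' G) + Ideal.span {X i ^ N} =
    Ideal.span ((fun d => (monomial d (1 : k))) '' (G ∪ {Finsupp.single i N})) := by
  rw [Set.image_union, Ideal.span_union, Set.image_singleton, X_pow_eq_monomial,
    Submodule.add_eq_sup]

/-- Truncating `e` by `N` in the variable `i` leaves the other exponents alone, so divisibility by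
`d` is checked separately at `i` and away from `i`. -/
lemma le_tsub_single {r : ℕ} (i : Fin r) (N : ℕ) {d e : Fin r →₀ ℕ} (h0 : d i ≤ e i - N)
    (h : ∀ j, j ≠ i → d j ≤ e j) : d ≤ e - Finsupp.single i N := by
  intro j
  by_cases hj : j = i
  · subst hj; simpa using h0
  · simpa [Finsupp.single_apply, Ne.symm hj] using h j hj

/-- Let `S` be a polynomial ring over a field `k` with a variable `x`, and
`I₁`, `J₁`, `K₁` monomial ideals of `S` none of whose minimal monomial generators is divisible
by `x`.  Set `I = I₁ + (x^m)`, `J = J₁ + (x^n)` and `K = K₁ + (x^s)` with `m ≥ n ≥ s ≥ 1`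
and `m ≤ n + s`.  Then `((IJK) : x^(n+s)) = I₁ + J₁K₁ + x^(m-n) J₁ + x^(m-s) K₁ + (x^m)`. -/
theorem colon_triple_product_eq_three {k : Type*} [Field k] {r : ℕ} (i : Fin r)
    (I₁ J₁ K₁ : Ideal (MvPolynomial (Fin r) k))
    (hI₁ : IsMonomialIdealAvoiding i I₁) (hJ₁ : IsMonomialIdealAvoiding i J₁)
    (hK₁ : IsMonomialIdealAvoiding i K₁) (m n s : ℕ) (hmn : n ≤ m) (hns : s ≤ n) (hs : 1 ≤ s)
    (hm : m ≤ n + s)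
    (I J K : Ideal (MvPolynomial (Fin r) k))
    (hI : I = I₁ + Ideal.span {(X i : MvPolynomial (Fin r) k) ^ m})
    (hJ : J = J₁ + Ideal.span {(X i : MvPolynomial (Fin r) k) ^ n})
    (hK : K = K₁ + Ideal.span {(X i : MvPolynomial (Fin r) k) ^ s}) :
    (I * J * K).colon (Ideal.span {(X i : MvPolynomial (Fin r) k) ^ (n + s)}) =
      I₁ + J₁ * K₁ + Ideal.span {(X i : MvPolynomial (Fin r) k) ^ (m - n)} * J₁ +
        Ideal.span {(X i : MvPolynomial (Fin r) k) ^ (m - s)} * K₁ +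
        Ideal.span {(X i : MvPolynomial (Fin r) k) ^ m} := by
  set x : MvPolynomial (Fin r) k := X i with hx
  set R := I₁ + J₁ * K₁ + Ideal.span {x ^ (m - n)} * J₁ + Ideal.span {x ^ (m - s)} * K₁ +
    Ideal.span {x ^ m} with hR
  have hRI : I₁ ≤ R := by
    simp only [hR, Submodule.add_eq_sup, sup_assoc]; exact le_sup_left
  have hRJK : J₁ * K₁ ≤ R := by
    simp only [hR, Submodule.add_eq_sup, sup_assoc]
    exact le_sup_of_le_right le_sup_left
  have hRJ : Ideal.span {x ^ (m - n)} * J₁ ≤ R := by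
    simp only [hR, Submodule.add_eq_sup, sup_assoc]
    exact le_sup_of_le_right (le_sup_of_le_right le_sup_left)
  have hRK : Ideal.span {x ^ (m - s)} * K₁ ≤ R := by
    simp only [hR, Submodule.add_eq_sup]
    exact le_sup_of_le_left le_sup_right
  have hRx : Ideal.span {x ^ m} ≤ R := by
    simp only [hR, Submodule.add_eq_sup]
    exact le_sup_right
  have hII : I₁ ≤ I := by rw [hI]; exact le_sup_left
  have hJJ : J₁ ≤ J := by rw [hJ]; exact le_sup_left
  have hKK : K₁ ≤ K := by rw [hK]; exact le_sup_left
  have hxI : x ^ m ∈ I := by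
    rw [hI]; exact Ideal.mem_sup_right (Ideal.mem_span_singleton_self _)
  have hxJ : x ^ n ∈ J := by
    rw [hJ]; exact Ideal.mem_sup_right (Ideal.mem_span_singleton_self _)
  have hxK : x ^ s ∈ K := by
    rw [hK]; exact Ideal.mem_sup_right (Ideal.mem_span_singleton_self _)
  ext f
  rw [Ideal.mem_colon_span_singleton]
  constructor
  · intro hf
    obtain ⟨GI, hGI, rfl⟩ := hI₁
    obtain ⟨GJ, hGJ, rfl⟩ := hJ₁
    obtain ⟨GK, hGK, rfl⟩ := hK₁
    rw [hI, hJ, hK, span_monomial_add_pow, span_monomial_add_pow, span_monomial_add_pow,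
      span_monomial_mul, span_monomial_mul] at hf
    refine (Ideal.span_le.mpr ?_) (mem_span_monomial_tsub i (n + s) _ f hf)
    rintro _ ⟨_, ⟨_, ⟨_, ⟨a, ha, b, hb, rfl⟩, c, hc, rfl⟩, rfl⟩, rfl⟩
    rcases ha with ha | rfl
    · refine monomial_mem_of_le R (hRI (Ideal.subset_span ⟨a, ha, rfl⟩)) (le_tsub_single i _ ?_ ?_)
      · simp [hGI a ha]
      · intro j _
        simp only [Finsupp.add_apply]
        omega
    rcases hb with hb | rfl <;> rcases hc with hc | rfl
    · have hmem : monomial (b + c) (1 : k) ∈ R := by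
        rw [← one_mul (1 : k), ← monomial_mul]
        exact hRJK (Ideal.mul_mem_mul (Ideal.subset_span ⟨b, hb, rfl⟩)
          (Ideal.subset_span ⟨c, hc, rfl⟩))
      refine monomial_mem_of_le R hmem (le_tsub_single i _ ?_ ?_)
      · simp [hGJ b hb, hGK c hc]
      · intro j _
        simp only [Finsupp.add_apply]
        omega
    · have hmem : monomial (Finsupp.single i (m - n) + b) (1 : k) ∈ R := by
        rw [← one_mul (1 : k), ← monomial_mul, ← X_pow_eq_monomial]
        exact hRJ (Ideal.mul_mem_mul (Ideal.mem_span_singleton_self _)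
          (Ideal.subset_span ⟨b, hb, rfl⟩))
      refine monomial_mem_of_le R hmem (le_tsub_single i _ ?_ ?_)
      · simp [hGJ b hb]
        omega
      · intro j hj
        simp [Ne.symm hj]
    · have hmem : monomial (Finsupp.single i (m - s) + c) (1 : k) ∈ R := by
        rw [← one_mul (1 : k), ← monomial_mul, ← X_pow_eq_monomial]
        exact hRK (Ideal.mul_mem_mul (Ideal.mem_span_singleton_self _)
          (Ideal.subset_span ⟨c, hc, rfl⟩))
      refine monomial_mem_of_le R hmem (le_tsub_single i _ ?_ ?_)
      · simp [hGK c hc]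
        omega
      · intro j hj
        simp [Ne.symm hj]
    · have hmem : monomial (Finsupp.single i m) (1 : k) ∈ R := by
        rw [← X_pow_eq_monomial]
        exact hRx (Ideal.mem_span_singleton_self _)
      refine monomial_mem_of_le R hmem (le_tsub_single i _ ?_ ?_)
      · simp
        omega
      · intro j hj
        simp [Ne.symm hj]
  · intro hf
    suffices h : R ≤ (I * J * K).colon (Ideal.span {x ^ (n + s)}) from
      Ideal.mem_colon_span_singleton.mp (h hf)
    simp only [hR, Submodule.add_eq_sup, sup_le_iff, Ideal.mul_le, Ideal.span_singleton_le_iff_mem,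
      Ideal.mem_span_singleton]
    refine ⟨⟨⟨⟨?_, ?_⟩, ?_⟩, ?_⟩, ?_⟩
    · intro a ha
      rw [Ideal.mem_colon_span_singleton, pow_add, ← mul_assoc]
      exact Ideal.mul_mem_mul (Ideal.mul_mem_mul (hII ha) hxJ) hxK
    · intro b hb c hc
      have key : b * c * x ^ (n + s) = x ^ (n + s - m) * (x ^ m * b * c) := by
        rw [← Nat.sub_add_cancel hm, pow_add, Nat.add_sub_cancel]; ring
      rw [Ideal.mem_colon_span_singleton, key]
      exact Ideal.mul_mem_left _ _ (Ideal.mul_mem_mul (Ideal.mul_mem_mul hxI (hJJ hb)) (hKK hc))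
    · rintro _ ⟨g, rfl⟩ b hb
      have key : x ^ (m - n) * g * b * x ^ (n + s) = g * (x ^ m * b * x ^ s) := by
        nth_rewrite 2 [← Nat.sub_add_cancel hmn]; ring
      rw [Ideal.mem_colon_span_singleton, key]
      exact Ideal.mul_mem_left _ _ (Ideal.mul_mem_mul (Ideal.mul_mem_mul hxI (hJJ hb)) hxK)
    · rintro _ ⟨g, rfl⟩ c hc
      have key : x ^ (m - s) * g * c * x ^ (n + s) = g * (x ^ m * x ^ n * c) := by
        nth_rewrite 2 [← Nat.sub_add_cancel (hns.trans hmn)]; ring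
      rw [Ideal.mem_colon_span_singleton, key]
      exact Ideal.mul_mem_left _ _ (Ideal.mul_mem_mul (Ideal.mul_mem_mul hxI hxJ) (hKK hc))
    · rw [Ideal.mem_colon_span_singleton, pow_add, ← mul_assoc]
      exact Ideal.mul_mem_mul (Ideal.mul_mem_mul hxI hxJ) hxK
end
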